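/- Let μ^c be the cost satisfaction function. For all positive integers k1 ≤ k2 there exists a PB instance I with budget b, minimum project cost c_min = b/k2 and maximum project cost c_max = b/k1, such that every feasible outcome of I satisfying EJR1_{μ^c} has utilitarian ratio (w.r.t. μ^c) at most 2/⌊√(b/c_min)⌋ − (c_min + x·c_max)/b, where x = ⌊√k2⌋·(c_min/c_max) − ⌊⌊√k2⌋·(c_min/c_max)⌋. -/

import Mathlib

open Finset
open scoped Classical

noncomputable section

/-- A participatory budgeting (PB) instance. -/
structure PB (π ν : Type) where
  projs : Finset π
  voters : Finset ν
  approves : ν → Finset π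
  cost : π → ℝ
  budget : ℝ
  projs_nonempty : projs.Nonempty
  budget_pos : 0 < budget
  cost_pos : ∀ p ∈ projs, 0 < cost p
  cost_le_budget : ∀ p ∈ projs, cost p ≤ budget
  approves_subset : ∀ i ∈ voters, approves i ⊆ projs

/-- A satisfaction function assigns a positive value to each positive cost. -/
def IsSat (μ : ℝ → ℝ) : Prop := ∀ t : ℝ, 0 < t → 0 < μ t

/-- A DNS function: weakly increasing, with weakly decreasing satisfaction per unit cost. -/
def IsDNS (μ : ℝ → ℝ) : Prop :=
  IsSat μ ∧ (∀ s t : ℝ, 0 < s → s ≤ t → μ s ≤ μ t) ∧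
    (∀ s t : ℝ, 0 < s → s ≤ t → μ t / t ≤ μ s / s)

namespace PB

variable {π ν : Type}

/-- Supporters of a project. -/
def supp (I : PB π ν) (p : π) : Finset ν := I.voters.filter (fun i => p ∈ I.approves i)

/-- Total cost of a set of projects. -/
def costOf (I : PB π ν) (S : Finset π) : ℝ := ∑ p ∈ S, I.cost p

/-- A feasible outcome. -/
def feasibleSet (I : PB π ν) (S : Finset π) : Prop := S ⊆ I.projs ∧ I.costOf S ≤ I.budget

/-- Minimum project cost. -/
def cmin (I : PB π ν) : ℝ := I.projs.inf' I.projs_nonempty I.cost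

/-- Maximum project cost. -/
def cmax (I : PB π ν) : ℝ := I.projs.sup' I.projs_nonempty I.cost

/-- Utilitarian welfare of a set of projects. -/
def uw (I : PB π ν) (μ : ℝ → ℝ) (S : Finset π) : ℝ :=
  ∑ p ∈ S, ((I.supp p).card : ℝ) * μ (I.cost p)

/-- The value ("bang per buck") of a project. -/
def projVal (I : PB π ν) (μ : ℝ → ℝ) (p : π) : ℝ :=
  ((I.supp p).card : ℝ) * μ (I.cost p) / I.cost p

/-- Satisfaction of voter `i` from an outcome. -/
def satOf (I : PB π ν) (μ : ℝ → ℝ) (i : ν) (S : Finset π) : ℝ :=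
  ∑ p ∈ S ∩ I.approves i, μ (I.cost p)

/-- Minimum satisfaction of a project in the instance. -/
def muMin (I : PB π ν) (μ : ℝ → ℝ) : ℝ :=
  I.projs.inf' I.projs_nonempty (fun p => μ (I.cost p))

/-- Maximum satisfaction of a project in the instance. -/
def muMax (I : PB π ν) (μ : ℝ → ℝ) : ℝ :=
  I.projs.sup' I.projs_nonempty (fun p => μ (I.cost p))

/-- The maximal utilitarian welfare over feasible outcomes. -/
def maxUW (I : PB π ν) (μ : ℝ → ℝ) : ℝ :=
  (I.projs.powerset.filter (fun S => I.costOf S ≤ I.budget)).sup'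
    ⟨∅, Finset.mem_filter.mpr ⟨Finset.empty_mem_powerset _,
      by simpa [PB.costOf] using I.budget_pos.le⟩⟩
    (I.uw μ)

/-- A group `N'` is `T`-cohesive. -/
def cohesive (I : PB π ν) (N' : Finset ν) (T : Finset π) : Prop :=
  N' ⊆ I.voters ∧ T ⊆ I.projs ∧ (∀ i ∈ N', T ⊆ I.approves i) ∧
    I.costOf T ≤ ((N'.card : ℝ) / (I.voters.card : ℝ)) * I.budget

/-- Extended justified representation up to one project w.r.t. `μ`. -/
def EJR1 (I : PB π ν) (μ : ℝ → ℝ) (W : Finset π) : Prop :=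
  ∀ N' T, I.cohesive N' T →
    T ⊆ W ∨ ∃ i ∈ N', ∃ p ∈ I.approves i, p ∉ W ∧
      I.satOf μ i W + μ (I.cost p) > I.satOf μ i T

/-- Pick the element of maximal `f`-value, breaking ties by the linear order. -/
def pickMax [LinearOrder π] (f : π → ℝ) (S : Finset π) (h : S.Nonempty) : π :=
  (S.filter (fun p => ∀ q ∈ S, f q ≤ f p)).min' (by
    obtain ⟨p, hp, hm⟩ := S.exists_max_image f h
    exact ⟨p, Finset.mem_filter.mpr ⟨hp, hm⟩⟩)

/-- Pick the element of minimal `f`-value, breaking ties by the linear order. -/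
def pickMin [LinearOrder π] (f : π → ℝ) (S : Finset π) (h : S.Nonempty) : π :=
  (S.filter (fun p => ∀ q ∈ S, f p ≤ f q)).min' (by
    obtain ⟨p, hp, hm⟩ := S.exists_min_image f h
    exact ⟨p, Finset.mem_filter.mpr ⟨hp, hm⟩⟩)

section Greedy

variable [LinearOrder π]

/-- One choice of the greedy rule: among the unchosen affordable projects, the one of
maximum value (ties broken by the linear order); `none` if no project is affordable. -/
def greedyStep (I : PB π ν) (μ : ℝ → ℝ) (rem : Finset π) (budg : ℝ) : Option π :=
  if h : (rem.filter (fun p => I.cost p ≤ budg)).Nonempty then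
    some (pickMax (I.projVal μ) (rem.filter (fun p => I.cost p ≤ budg)) h)
  else none

/-- The (ordered) list of projects chosen by the greedy rule, with fuel. -/
def greedyAux (I : PB π ν) (μ : ℝ → ℝ) : ℕ → Finset π → ℝ → List π
  | 0, _, _ => []
  | (k+1), rem, budg =>
    match I.greedyStep μ rem budg with
    | none => []
    | some p => p :: greedyAux I μ k (rem.erase p) (budg - I.cost p)

/-- The projects chosen by `Greedy_μ`, in order of selection. -/
def greedySeq (I : PB π ν) (μ : ℝ → ℝ) : List π :=
  greedyAux I μ I.projs.card I.projs I.budget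

/-- The outcome of the greedy rule started from a set `rem` of unchosen projects
with remaining budget `budg`. -/
def greedyFrom (I : PB π ν) (μ : ℝ → ℝ) (rem : Finset π) (budg : ℝ) : Finset π :=
  (greedyAux I μ rem.card rem budg).toFinset

/-- The outcome of `Greedy_μ`. -/
def greedy (I : PB π ν) (μ : ℝ → ℝ) : Finset π := (I.greedySeq μ).toFinset

/-- The state (unchosen projects, remaining budget) of `Greedy_μ` after `k` stages. -/
def greedyStateAux (I : PB π ν) (μ : ℝ → ℝ) : ℕ → Finset π × ℝ
  | 0 => (I.projs, I.budget)
  | (k+1) =>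
    match I.greedyStep μ (greedyStateAux I μ k).1 (greedyStateAux I μ k).2 with
    | none => greedyStateAux I μ k
    | some p => ((greedyStateAux I μ k).1.erase p, (greedyStateAux I μ k).2 - I.cost p)

/-- The project chosen by `Greedy_μ` at stage `k+1` (i.e. after `k` stages), if any. -/
def greedyChoice (I : PB π ν) (μ : ℝ → ℝ) (k : ℕ) : Option π :=
  I.greedyStep μ (I.greedyStateAux μ k).1 (I.greedyStateAux μ k).2

end Greedy

section MES

variable [LinearOrder π]

/-- The set of values `ρ ≥ 0` at which project `p` can be bought given voter budgets `bud`. -/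
def rhoSet (I : PB π ν) (μ : ℝ → ℝ) (bud : ν → ℝ) (p : π) : Set ℝ :=
  {ρ : ℝ | 0 ≤ ρ ∧ ∑ i ∈ I.supp p, min (bud i) (ρ * μ (I.cost p)) = I.cost p}

/-- `ρ(p)`: the least `ρ ≥ 0` at which `p` can be bought (junk value if none exists). -/
def rho (I : PB π ν) (μ : ℝ → ℝ) (bud : ν → ℝ) (p : π) : ℝ := sInf (I.rhoSet μ bud p)

/-- One choice of MES: among the unchosen projects with `ρ(p) < ∞`, one minimizing `ρ(p)`
(ties broken by the linear order); `none` if no project can be bought. -/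
def mesStep (I : PB π ν) (μ : ℝ → ℝ) (rem : Finset π) (bud : ν → ℝ) : Option π :=
  if h : (rem.filter (fun p => (I.rhoSet μ bud p).Nonempty)).Nonempty then
    some (pickMin (I.rho μ bud) (rem.filter (fun p => (I.rhoSet μ bud p).Nonempty)) h)
  else none

/-- Voter budgets after the supporters of `p` pay for it. -/
def mesPay (I : PB π ν) (μ : ℝ → ℝ) (bud : ν → ℝ) (p : π) : ν → ℝ :=
  fun i => if i ∈ I.supp p then bud i - min (bud i) (I.rho μ bud p * μ (I.cost p)) else bud i

/-- The state (unchosen projects, voter budgets) of `MES_μ` after `k` stages. -/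
def mesStateAux (I : PB π ν) (μ : ℝ → ℝ) : ℕ → Finset π × (ν → ℝ)
  | 0 => (I.projs, fun _ => I.budget / (I.voters.card : ℝ))
  | (k+1) =>
    match I.mesStep μ (mesStateAux I μ k).1 (mesStateAux I μ k).2 with
    | none => mesStateAux I μ k
    | some p => ((mesStateAux I μ k).1.erase p, I.mesPay μ (mesStateAux I μ k).2 p)

/-- The project chosen by `MES_μ` at stage `k+1` (i.e. after `k` stages), if any. -/
def mesChoice (I : PB π ν) (μ : ℝ → ℝ) (k : ℕ) : Option π :=
  I.mesStep μ (I.mesStateAux μ k).1 (I.mesStateAux μ k).2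

/-- The final state of `MES_μ`. -/
def mesFinal (I : PB π ν) (μ : ℝ → ℝ) : Finset π × (ν → ℝ) :=
  I.mesStateAux μ I.projs.card

/-- The outcome of `MES_μ`. -/
def mesOutcome (I : PB π ν) (μ : ℝ → ℝ) : Finset π := I.projs \ (I.mesFinal μ).1

/-- The outcome of `MES_μ` completed by `Greedy_μ`: run MES, then greedy on the unchosen
projects with the remaining total budget. -/
def completedMES (I : PB π ν) (μ : ℝ → ℝ) : Finset π :=
  I.mesOutcome μ ∪
    I.greedyFrom μ (I.mesFinal μ).1 (I.budget - I.costOf (I.mesOutcome μ))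

/-- Voter `i` is budget-limited for project `p` after `k` stages of `MES_μ`:
`p` is unchosen and approved by `i`, affordable from the total remaining budget,
but an equal split of its cost exceeds `i`'s personal budget. -/
def budgetLimitedAt (I : PB π ν) (μ : ℝ → ℝ) (k : ℕ) (i : ν) (p : π) : Prop :=
  i ∈ I.voters ∧ p ∈ (I.mesStateAux μ k).1 ∧ p ∈ I.approves i ∧
    I.cost p ≤ ∑ j ∈ I.voters, (I.mesStateAux μ k).2 j ∧
    (I.mesStateAux μ k).2 i < I.cost p / ((I.supp p).card : ℝ)

end MES

/-- Total cost of a list of projects. -/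
def listCost (I : PB π ν) (L : List π) : ℝ := (L.map I.cost).sum

/-- Total utilitarian welfare of a list of projects. -/
def listUW (I : PB π ν) (μ : ℝ → ℝ) (L : List π) : ℝ :=
  (L.map (fun p => ((I.supp p).card : ℝ) * μ (I.cost p))).sum

end PB

/-!
Take `k₂` voters and budget `1`. A bloc of `s` voters approves `k₁` common projects of cost
`1 / k₁`; every other voter approves only a private project of cost `1 / k₂`, exactly her share of
the budget. Funding the common projects exhausts the budget and yields welfare `s`. An EJR1
outcome, however, must fund all private projects, which leaves `s / k₂` of the budget, enough for
at most `⌊s k₁ / k₂⌋` common projects. The outcome's welfare is thus at most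
`1 - s / k₂ + ⌊s k₁ / k₂⌋ s / k₁`, and for `s = ⌊√k₂⌋` the inequality `s² ≤ k₂` bounds this by the
claimed fraction of `s`.
-/

namespace PB

section General

variable {π ν : Type} {I : PB π ν} {μ : ℝ → ℝ} {S T W : Finset π} {p : π} {i : ν}

theorem mem_supp : i ∈ I.supp p ↔ i ∈ I.voters ∧ p ∈ I.approves i :=
  mem_filter

theorem cmin_eq_cost (hp : p ∈ I.projs) (hmin : ∀ q ∈ I.projs, I.cost p ≤ I.cost q) :
    I.cmin = I.cost p :=
  le_antisymm (inf'_le _ hp) (le_inf' _ _ hmin)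

theorem cmax_eq_cost (hp : p ∈ I.projs) (hmax : ∀ q ∈ I.projs, I.cost q ≤ I.cost p) :
    I.cmax = I.cost p :=
  le_antisymm (sup'_le _ _ hmax) (le_sup' _ hp)

theorem costOf_union [DecidableEq π] (h : Disjoint S T) :
    I.costOf (S ∪ T) = I.costOf S + I.costOf T :=
  sum_union h

theorem uw_union [DecidableEq π] (h : Disjoint S T) : I.uw μ (S ∪ T) = I.uw μ S + I.uw μ T :=
  sum_union h

theorem costOf_eq_card_mul {c : ℝ} (h : ∀ p ∈ S, I.cost p = c) : I.costOf S = #S * c := by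
  rw [costOf, sum_congr rfl h, sum_const, nsmul_eq_mul]

theorem uw_eq_mul_costOf {m : ℕ} (h : ∀ p ∈ S, #(I.supp p) = m) :
    I.uw (fun t => t) S = m * I.costOf S := by
  rw [uw, costOf, mul_sum]
  exact sum_congr rfl fun p hp => by rw [h p hp]

theorem uw_nonneg (hμ : IsSat μ) (hS : S ⊆ I.projs) : 0 ≤ I.uw μ S :=
  sum_nonneg fun p hp => mul_nonneg (Nat.cast_nonneg _) (hμ _ (I.cost_pos p (hS hp))).le

theorem uw_le_maxUW (hS : I.feasibleSet S) : I.uw μ S ≤ I.maxUW μ :=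
  le_sup' _ (mem_filter.mpr ⟨mem_powerset.mpr hS.1, hS.2⟩)

theorem EJR1.mem_of_approves_eq_singleton (hW : I.EJR1 μ W) (hi : i ∈ I.voters)
    (happ : I.approves i = {p}) (hcost : I.cost p ≤ 1 / #I.voters * I.budget) : p ∈ W := by
  have hcoh : I.cohesive {i} {p} := by
    refine ⟨singleton_subset_iff.mpr hi, happ ▸ I.approves_subset i hi, ?_, ?_⟩
    · simp [happ]
    · simpa [costOf] using hcost
  obtain hsub | ⟨j, hj, q, hq, hqW, hsat⟩ := hW _ _ hcoh
  · exact singleton_subset_iff.mp hsub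
  · obtain rfl := mem_singleton.mp hj
    obtain rfl : q = p := by simpa [happ] using hq
    simp [satOf, happ, inter_singleton_of_notMem hqW] at hsat

end General

section Bloc

/-- The projects `s, …, k₂ - 1` of `blocInstance`, each approved only by the voter it is numbered
after. -/
abbrev privateProjects (s k₂ : ℕ) : Finset ℕ := Ico s k₂

/-- The projects `k₂, …, k₂ + k₁ - 1` of `blocInstance`, approved by the bloc. -/
abbrev commonProjects (k₁ k₂ : ℕ) : Finset ℕ := Ico k₂ (k₂ + k₁)

variable {s k₁ k₂ p : ℕ} {W : Finset ℕ} (hk₁ : 0 < k₁) (hk₂ : 0 < k₂) (hs : s ≤ k₂)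

/-- The instance with unit budget and voters `0, …, k₂ - 1` in which a bloc formed by the first `s`
voters approves the `k₁` common projects `k₂, …, k₂ + k₁ - 1`, each of cost `1 / k₁`, while every
other voter `i` approves only a private project of cost `1 / k₂`, which is also numbered `i`. -/
def blocInstance : PB ℕ ℕ where
  projs := Ico s (k₂ + k₁)
  voters := range k₂
  approves i := if i < s then commonProjects k₁ k₂ else {i}
  cost p := if p < k₂ then 1 / k₂ else 1 / k₁
  budget := 1
  projs_nonempty := nonempty_Ico.mpr (by omega)
  budget_pos := one_pos
  cost_pos p _ := by split_ifs <;> positivity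
  cost_le_budget p _ := by
    rw [one_div, one_div]
    split_ifs
    · exact Nat.cast_inv_le_one k₂
    · exact Nat.cast_inv_le_one k₁
  approves_subset i hi p hp := by
    rw [mem_range] at hi
    split_ifs at hp <;> simp only [mem_Ico, mem_singleton] at hp ⊢ <;> omega

theorem cost_blocInstance_of_lt (hp : p < k₂) : (blocInstance hk₁ hk₂ hs).cost p = 1 / k₂ :=
  if_pos hp

theorem cost_blocInstance_of_le (hp : k₂ ≤ p) : (blocInstance hk₁ hk₂ hs).cost p = 1 / k₁ :=
  if_neg hp.not_gt

theorem supp_of_mem_privateProjects (hp : p ∈ privateProjects s k₂) :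
    (blocInstance hk₁ hk₂ hs).supp p = {p} := by
  obtain ⟨hsp, hpk⟩ := mem_Ico.mp hp
  ext i
  simp only [mem_supp, blocInstance, mem_range, mem_singleton]
  split_ifs <;> simp only [mem_Ico, mem_singleton] <;> omega

theorem supp_of_mem_commonProjects (hp : p ∈ commonProjects k₁ k₂) :
    (blocInstance hk₁ hk₂ hs).supp p = range s := by
  obtain ⟨hkp, hpk⟩ := mem_Ico.mp hp
  ext i
  simp only [mem_supp, blocInstance, mem_range]
  split_ifs <;> simp only [mem_Ico, mem_singleton] <;> omega

theorem cmin_blocInstance (hk : k₁ ≤ k₂) (h : s < k₂ ∨ k₁ = k₂) :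
    (blocInstance hk₁ hk₂ hs).cmin = 1 / k₂ := by
  have cost_s : (blocInstance hk₁ hk₂ hs).cost s = 1 / k₂ := by
    obtain hlt | rfl := h
    · exact cost_blocInstance_of_lt hk₁ hk₂ hs hlt
    · exact ite_self _
  rw [← cost_s]
  refine cmin_eq_cost (mem_Ico.mpr (by omega)) fun q _ => cost_s.trans_le ?_
  obtain hq | hq := lt_or_ge q k₂
  · rw [cost_blocInstance_of_lt hk₁ hk₂ hs hq]
  · rw [cost_blocInstance_of_le hk₁ hk₂ hs hq]
    gcongr

theorem cmax_blocInstance (hk : k₁ ≤ k₂) : (blocInstance hk₁ hk₂ hs).cmax = 1 / k₁ := by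
  have cost_k₂ := cost_blocInstance_of_le hk₁ hk₂ hs le_rfl
  rw [← cost_k₂]
  refine cmax_eq_cost (mem_Ico.mpr (by omega)) fun q _ => le_of_le_of_eq ?_ cost_k₂.symm
  obtain hq | hq := lt_or_ge q k₂
  · rw [cost_blocInstance_of_lt hk₁ hk₂ hs hq]
    gcongr
  · rw [cost_blocInstance_of_le hk₁ hk₂ hs hq]

theorem costOf_privateProjects :
    (blocInstance hk₁ hk₂ hs).costOf (privateProjects s k₂) = 1 - s * (1 / k₂) := by
  rw [costOf_eq_card_mul fun p hp => cost_blocInstance_of_lt hk₁ hk₂ hs (mem_Ico.mp hp).2,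
    Nat.card_Ico, Nat.cast_sub hs]
  field_simp

theorem uw_privateProjects :
    (blocInstance hk₁ hk₂ hs).uw (fun t => t) (privateProjects s k₂) = 1 - s * (1 / k₂) := by
  have card_supp : ∀ p ∈ privateProjects s k₂, #((blocInstance hk₁ hk₂ hs).supp p) = 1 := by
    intro p hp
    rw [supp_of_mem_privateProjects hk₁ hk₂ hs hp, card_singleton]
  rw [uw_eq_mul_costOf card_supp, costOf_privateProjects, Nat.cast_one, one_mul]

theorem costOf_of_subset_commonProjects (hW : W ⊆ commonProjects k₁ k₂) :
    (blocInstance hk₁ hk₂ hs).costOf W = #W * (1 / k₁) :=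
  costOf_eq_card_mul fun _ hp => cost_blocInstance_of_le hk₁ hk₂ hs (mem_Ico.mp (hW hp)).1

theorem uw_of_subset_commonProjects (hW : W ⊆ commonProjects k₁ k₂) :
    (blocInstance hk₁ hk₂ hs).uw (fun t => t) W = s * (#W * (1 / k₁)) := by
  have card_supp : ∀ p ∈ W, #((blocInstance hk₁ hk₂ hs).supp p) = s := by
    intro p hp
    rw [supp_of_mem_commonProjects hk₁ hk₂ hs (hW hp), card_range]
  rw [uw_eq_mul_costOf card_supp, costOf_of_subset_commonProjects hk₁ hk₂ hs hW]

theorem le_maxUW_blocInstance : (s : ℝ) ≤ (blocInstance hk₁ hk₂ hs).maxUW (fun t => t) := by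
  have card_mul : (#(commonProjects k₁ k₂) : ℝ) * (1 / k₁) = 1 := by
    rw [Nat.card_Ico, Nat.add_sub_cancel_left]
    field_simp
  have hfeas : (blocInstance hk₁ hk₂ hs).feasibleSet (commonProjects k₁ k₂) :=
    ⟨Ico_subset_Ico_left hs,
      (costOf_of_subset_commonProjects hk₁ hk₂ hs subset_rfl).trans_le card_mul.le⟩
  calc (s : ℝ) = (blocInstance hk₁ hk₂ hs).uw (fun t => t) (commonProjects k₁ k₂) := by
        rw [uw_of_subset_commonProjects hk₁ hk₂ hs subset_rfl, card_mul, mul_one]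
    _ ≤ _ := uw_le_maxUW hfeas

variable {hk₁ hk₂ hs}

theorem privateProjects_subset_of_EJR1 {μ : ℝ → ℝ} (hW : (blocInstance hk₁ hk₂ hs).EJR1 μ W) :
    privateProjects s k₂ ⊆ W := by
  intro i hi
  obtain ⟨hsi, hik⟩ := mem_Ico.mp hi
  refine hW.mem_of_approves_eq_singleton (mem_range.mpr hik) (if_neg hsi.not_gt) ?_
  rw [cost_blocInstance_of_lt hk₁ hk₂ hs hik]
  simp [blocInstance]

theorem uw_blocInstance_le_of_EJR1 (hfeas : (blocInstance hk₁ hk₂ hs).feasibleSet W)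
    (hW : (blocInstance hk₁ hk₂ hs).EJR1 (fun t => t) W) :
    (blocInstance hk₁ hk₂ hs).uw (fun t => t) W ≤
      1 - s * (1 / k₂) + s * (⌊(s : ℝ) * (1 / k₂ / (1 / k₁))⌋ * (1 / k₁)) := by
  obtain ⟨hsub : W ⊆ Ico s (k₂ + k₁), hcost⟩ := hfeas
  set C := W ∩ commonProjects k₁ k₂
  have hC : C ⊆ commonProjects k₁ k₂ := inter_subset_right
  have hdisj : Disjoint (privateProjects s k₂) C :=
    (Ico_disjoint_Ico_consecutive _ _ _).mono_right hC
  have hsplit : W = privateProjects s k₂ ∪ C := by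
    rw [union_inter_distrib_left, union_eq_right.mpr (privateProjects_subset_of_EJR1 hW),
      Ico_union_Ico_eq_Ico hs (Nat.le_add_right _ _), inter_eq_left.mpr hsub]
  have card_le : (#C : ℝ) ≤ ⌊(s : ℝ) * (1 / k₂ / (1 / k₁))⌋ := by
    have hbudget : 1 - s * (1 / k₂) + #C * (1 / k₁) ≤ (1 : ℝ) := by
      rwa [hsplit, costOf_union hdisj, costOf_privateProjects,
        costOf_of_subset_commonProjects hk₁ hk₂ hs hC] at hcost
    have : ((#C : ℤ) : ℝ) ≤ s * (1 / k₂ / (1 / k₁)) := by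
      rw [← mul_div_assoc, le_div_iff₀ (by positivity), Int.cast_natCast]
      linarith
    exact_mod_cast Int.le_floor.mpr this
  rw [hsplit, uw_union hdisj, uw_privateProjects, uw_of_subset_commonProjects hk₁ hk₂ hs hC]
  gcongr

end Bloc

end PB

theorem welfare_bound_le_ratio_mul {s c d : ℝ} (F : ℝ) (hs : s ≠ 0) (hd : d ≠ 0)
    (hsc : s * s * c ≤ 1) :
    1 - s * c + s * (F * d) ≤ (2 / s - (c + (s * (c / d) - F) * d)) * s := by
  have expand : (2 / s - (c + (s * (c / d) - F) * d)) * s =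
      (1 - s * s * c) + (1 - s * c + s * (F * d)) := by
    field_simp
    ring
  linarith

/-- Tightness of the MES guarantee for EJR1 rules under cost satisfaction. -/
theorem prop_ratio_upper_bound (k1 k2 : ℕ) (hk1 : 0 < k1) (hk12 : k1 ≤ k2) :
    ∃ I : PB ℕ ℕ, I.cmin = I.budget / (k2 : ℝ) ∧ I.cmax = I.budget / (k1 : ℝ) ∧
      ∀ W : Finset ℕ, I.feasibleSet W → I.EJR1 (fun t => t) W →
        I.uw (fun t => t) W ≤
          (2 / ((⌊Real.sqrt (I.budget / I.cmin)⌋ : ℤ) : ℝ) -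
            (I.cmin +
              (((⌊Real.sqrt (k2 : ℝ)⌋ : ℤ) : ℝ) * (I.cmin / I.cmax) -
                ((⌊(((⌊Real.sqrt (k2 : ℝ)⌋ : ℤ) : ℝ) * (I.cmin / I.cmax))⌋ : ℤ) : ℝ)) *
                I.cmax) / I.budget) *
          I.maxUW (fun t => t) := by
  have hk2 : 0 < k2 := hk1.trans_le hk12
  have hsqrt : (0 : ℝ) < Nat.sqrt k2 := by exact_mod_cast Nat.sqrt_pos.mpr hk2
  have hsq : (Nat.sqrt k2 * Nat.sqrt k2 : ℝ) * (1 / k2) ≤ 1 := by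
    rw [mul_one_div, div_le_one (by positivity)]
    exact_mod_cast Nat.sqrt_le k2
  have hsmall : Nat.sqrt k2 < k2 ∨ k1 = k2 :=
    (Nat.lt_or_ge 1 k2).imp Nat.sqrt_lt_self (by omega)
  have hcmin := PB.cmin_blocInstance hk1 hk2 (Nat.sqrt_le_self k2) hk12 hsmall
  have hcmax := PB.cmax_blocInstance hk1 hk2 (Nat.sqrt_le_self k2) hk12
  refine ⟨PB.blocInstance hk1 hk2 (Nat.sqrt_le_self k2), hcmin, hcmax, fun W hfeas hW => ?_⟩
  rw [hcmin, hcmax, show (PB.blocInstance hk1 hk2 _).budget = 1 from rfl, one_div_one_div, div_one,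
    Real.floor_real_sqrt_eq_nat_sqrt, Int.cast_natCast]
  have hratio := (PB.uw_blocInstance_le_of_EJR1 hfeas hW).trans
    (welfare_bound_le_ratio_mul _ hsqrt.ne' (by positivity) hsq)
  refine hratio.trans (mul_le_mul_of_nonneg_left (PB.le_maxUW_blocInstance _ _ _) ?_)
  exact nonneg_of_mul_nonneg_left ((PB.uw_nonneg (fun _ => id) hfeas.1).trans hratio) hsqrt
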